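/- arXiv:2108.02534 — 2 statements merged into one kernel-verified Lean document; each statement's English description precedes it below -/
import Mathlib

section
/- Let m, n, r be positive integers with r < m, let C and D be (m+n)×(m+n) real symmetric matrices, and fix an orthogonal matrix U ∈ O(r+1) whose last column is the normalized all-ones vector in ℝ^{r+1}. For each (r+1)×(r+1) permutation matrix P, the matrix Uᵀ P U has block form P̂ ⊕ 1 for an r×r matrix P̂ (the standard representation image of P). Then E_{P}[ χ( C + (P̂ ⊕ I_{m+n−r}) D (P̂ ⊕ I_{m+n−r})ᵀ ) ] = E_{Q}[ χ( C + (Q ⊕ I_{m+n−r}) D (Q ⊕ I_{m+n−r})ᵀ ) ], where the left expectation is over P uniform among the (r+1)! permutation matrices and the right expectation is over Q Haar-distributed on the orthogonal group O(r). -/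
/-!
For fixed `A`, put `F(E) = ∑_P det (A - (P̂ ⊕ I) E (P̂ ⊕ I)ᵀ)`. Suppose `F(R E Rᵀ) = F(E)` whenever
`R = Q ⊕ I` with `Q` orthogonal. Then the permutation average is unchanged when every `P̂` is
replaced by `P̂ Q`; averaging over `Q` and using the left invariance of Haar measure turns it into
the orthogonal average. By Cartan–Dieudonné it is enough to treat reflections `R = 1 - c w wᵀ`.

A determinant is affine in a rank-one update, so `F(R E) - F(E R) = c · wᵀ K w` with a matrix `K`
depending neither on `c` nor on `w`. If `w` is a root of the standard representation, `R` is the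
image of a transposition and reindexing the sum over `P` gives `F(R E) = F(E R)`: the quadratic form
of `K` vanishes at the roots. These are the vectors `e_a - e_b`, and a quadratic form on the
hyperplane `∑ xᵢ = 0` vanishing at all of them is zero. Hence `F(R E) = F(E R)` for every reflection
`R`, which for `E R` in place of `E` reads `F(R E R) = F(E)`.
-/

open Polynomial Matrix MeasureTheory

noncomputable instance matMeasurableSpace (m n : ℕ) :
    MeasurableSpace (Matrix (Fin m) (Fin n) ℝ) :=
  MeasurableSpace.pi

/-- The permutation matrix of a permutation. -/
def permMat {N : ℕ} (σ : Equiv.Perm (Fin N)) : Matrix (Fin N) (Fin N) ℝ :=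
  Matrix.of fun i j => if σ j = i then (1 : ℝ) else 0

/-- `X ⊕ Y` : block-diagonal `diag(X, Y)`. -/
def blkDiag {m n : ℕ} (P : Matrix (Fin m) (Fin m) ℝ) (S : Matrix (Fin n) (Fin n) ℝ) :
    Matrix (Fin m ⊕ Fin n) (Fin m ⊕ Fin n) ℝ :=
  Matrix.fromBlocks P 0 0 S

/-- A probability measure on `s × s` real matrices is the *Haar distribution on `O(s)`* iff
it is supported on orthogonal matrices and invariant under left translation by every
orthogonal matrix (this characterizes the Haar probability measure of the compact group
`O(s)`). -/
def IsHaarOrthogonal {s : ℕ} (μ : Measure (Matrix (Fin s) (Fin s) ℝ)) : Prop :=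
  IsProbabilityMeasure μ ∧
  (∀ᵐ Q ∂μ, Qᵀ * Q = 1) ∧
  ∀ U : Matrix (Fin s) (Fin s) ℝ, Uᵀ * U = 1 → μ.map (fun Q => U * Q) = μ

section RankOneUpdate

variable {R S ν : Type*} [CommRing R] [CommRing S] [Fintype ν] [DecidableEq ν]

theorem det_add_vecMulVec_of_isUnit {A : Matrix ν ν R} (hA : IsUnit A.det) (u v : ν → R) :
    (A + vecMulVec u v).det = A.det + v ⬝ᵥ A.adjugate *ᵥ u := by
  have h := det_add_replicateCol_mul_replicateRow (ι := Unit) hA u v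
  rw [← vecMulVec_eq, ← replicateRow_vecMul, det_unique (_ : Matrix Unit Unit R), Matrix.add_apply,
    one_apply_eq, replicateRow_mul_replicateCol_apply, ← dotProduct_mulVec] at h
  rw [h, mul_add, mul_one, Matrix.inv_def, smul_mulVec, dotProduct_smul, smul_eq_mul,
    Ring.mul_inverse_cancel_left _ _ hA]

theorem map_det_add_vecMulVec (f : R →+* S) (A : Matrix ν ν R) (u v : ν → R) :
    f (A + vecMulVec u v).det = (A.map f + vecMulVec (f ∘ u) (f ∘ v)).det := by
  rw [f.map_det]
  congr 1
  ext i j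
  simp [vecMulVec_apply]

theorem map_det_add_dotProduct_adjugate_mulVec (f : R →+* S) (A : Matrix ν ν R) (u v : ν → R) :
    f (A.det + v ⬝ᵥ A.adjugate *ᵥ u) =
      (A.map f).det + (f ∘ v) ⬝ᵥ (A.map f).adjugate *ᵥ (f ∘ u) := by
  have hadj : (A.map f).adjugate = A.adjugate.map f := (f.map_adjugate A).symm
  have hvec : A.adjugate.map f *ᵥ (f ∘ u) = f ∘ (A.adjugate *ᵥ u) :=
    funext fun i => (f.map_mulVec A.adjugate u i).symm
  rw [map_add, f.map_det, f.map_dotProduct, hadj, hvec, RingHom.mapMatrix_apply]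

theorem det_add_vecMulVec_of_mem_nonZeroDivisors {A : Matrix ν ν R}
    (hA : A.det ∈ nonZeroDivisors R) (u v : ν → R) :
    (A + vecMulVec u v).det = A.det + v ⬝ᵥ A.adjugate *ᵥ u := by
  apply IsFractionRing.injective R (FractionRing R)
  rw [map_det_add_vecMulVec, map_det_add_dotProduct_adjugate_mulVec]
  apply det_add_vecMulVec_of_isUnit
  have h := IsLocalization.map_units (FractionRing R) ⟨A.det, hA⟩
  rwa [RingHom.map_det] at h

-- Both sides are polynomials in `A`: replace `A` by `A + X`, whose determinant is monic.
theorem det_add_vecMulVec (A : Matrix ν ν R) (u v : ν → R) :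
    (A + vecMulVec u v).det = A.det + v ⬝ᵥ A.adjugate *ᵥ u := by
  have h := det_add_vecMulVec_of_mem_nonZeroDivisors (A := charmatrix (-A))
    (charpoly_monic (-A)).mem_nonZeroDivisors (C ∘ u) (C ∘ v)
  have hA : (charmatrix (-A)).map (evalRingHom 0) = A := by
    ext i j
    simp [charmatrix_apply, diagonal_apply, apply_ite]
  have hC (w : ν → R) : evalRingHom 0 ∘ C ∘ w = w := by
    ext i
    simp
  apply_fun evalRingHom 0 at h
  rwa [map_det_add_vecMulVec, map_det_add_dotProduct_adjugate_mulVec, hA, hC, hC] at h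

end RankOneUpdate

section Householder

variable {κ : Type*} [Fintype κ] [DecidableEq κ]

/-- The matrix of the reflection in the hyperplane orthogonal to `v`. For `v = 0` it is the
identity, since `2 / 0 = 0`. -/
noncomputable def householder (v : κ → ℝ) : Matrix κ κ ℝ :=
  1 - (2 / (v ⬝ᵥ v)) • vecMulVec v v

theorem householder_transpose (v : κ → ℝ) : (householder v)ᵀ = householder v := by
  simp [householder, transpose_vecMulVec]

theorem householder_mul_self (v : κ → ℝ) : householder v * householder v = 1 := by
  rcases eq_or_ne v 0 with rfl | hv
  · simp [householder]
  have hv' : v ⬝ᵥ v ≠ 0 := dotProduct_self_eq_zero.not.mpr hv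
  have hP : vecMulVec v v * vecMulVec v v = (v ⬝ᵥ v) • vecMulVec v v := by
    rw [vecMulVec_mul_vecMulVec, vecMulVec_smul]
  simp only [householder, Matrix.sub_mul, Matrix.mul_sub, Matrix.one_mul, Matrix.mul_one,
    Matrix.smul_mul, Matrix.mul_smul, hP, smul_smul]
  rw [div_mul_cancel₀ _ hv']
  module

theorem householder_mulVec (v x : κ → ℝ) :
    householder v *ᵥ x = x - (2 * (v ⬝ᵥ x) / (v ⬝ᵥ v)) • v := by
  rw [householder, sub_mulVec, one_mulVec, smul_mulVec, vecMulVec_mulVec, op_smul_eq_smul,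
    smul_smul, div_mul_eq_mul_div]

theorem toEuclideanCLM_householder (v x : EuclideanSpace ℝ κ) :
    toEuclideanCLM (𝕜 := ℝ) (householder v.ofLp) x = (ℝ ∙ v)ᗮ.reflection x := by
  have hvv : ‖v‖ ^ 2 = v.ofLp ⬝ᵥ v.ofLp := by
    rw [EuclideanSpace.real_norm_sq_eq]
    simp only [dotProduct, sq]
  have hvx : inner ℝ v x = v.ofLp ⬝ᵥ x.ofLp := by
    rw [EuclideanSpace.inner_eq_star_dotProduct, dotProduct_comm, star_trivial]
  rw [Submodule.reflection_orthogonal_apply, Submodule.reflection_singleton_apply, neg_sub]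
  apply WithLp.ofLp_injective
  rw [ofLp_toEuclideanCLM, householder_mulVec, WithLp.ofLp_sub, WithLp.ofLp_smul, WithLp.ofLp_smul,
    hvx, RCLike.ofReal_real_eq_id, id_eq, hvv, two_nsmul, ← add_smul, ← add_div, ← two_mul]

theorem toEuclideanCLM_prod_householder (l : List (EuclideanSpace ℝ κ)) (x : EuclideanSpace ℝ κ) :
    toEuclideanCLM (𝕜 := ℝ) ((l.map fun v => householder v.ofLp).prod) x =
      (l.map fun v => (ℝ ∙ v)ᗮ.reflection).prod x := by
  induction l generalizing x with
  | nil => simp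
  | cons v l ih =>
    simp only [List.map_cons, List.prod_cons, map_mul, mul_apply_eq_comp, ih,
      toEuclideanCLM_householder, LinearIsometryEquiv.coe_mul, Function.comp_apply]

theorem exists_eq_prod_householder {Q : Matrix κ κ ℝ} (hQ : Q ∈ orthogonalGroup κ ℝ) :
    ∃ l : List (κ → ℝ), Q = (l.map householder).prod := by
  obtain ⟨l, -, hl⟩ := LinearIsometryEquiv.reflections_generate_dim
    (Unitary.linearIsometryEquiv ⟨toEuclideanCLM (𝕜 := ℝ) Q, Unitary.map_mem _ hQ⟩)
  refine ⟨l.map WithLp.ofLp, (toEuclideanCLM (n := κ) (𝕜 := ℝ)).injective ?_⟩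
  ext1 x
  rw [List.map_map]
  exact (DFunLike.congr_fun hl x).trans (toEuclideanCLM_prod_householder l x).symm

end Householder

section ConjDetSum

variable {R ι κ ν : Type*} [CommRing R] [Fintype ι] [Fintype κ] [DecidableEq κ] [Fintype ν]
  [DecidableEq ν]

theorem det_sub_mul_one_sub_smul_vecMulVec_mul (A M N : Matrix ν ν R) (c : R) (u v : ν → R) :
    (A - M * (1 - c • vecMulVec u v) * N).det =
      (A - M * N).det + c * (v ⬝ᵥ (N * (A - M * N).adjugate * M) *ᵥ u) := by
  have h : A - M * (1 - c • vecMulVec u v) * N =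
      (A - M * N) + vecMulVec (c • M *ᵥ u) (v ᵥ* N) := by
    rw [smul_vecMulVec, ← vecMulVec_mul, ← mul_vecMulVec]
    simp only [Matrix.sub_mul, Matrix.mul_sub, Matrix.mul_one, Matrix.mul_smul, Matrix.smul_mul]
    abel
  rw [h, det_add_vecMulVec, mulVec_smul, dotProduct_smul, smul_eq_mul, ← dotProduct_mulVec,
    mulVec_mulVec, mulVec_mulVec]

/-- The sum of `det (A - B E Bᵀ)` over a finite family of matrices `B`. For `A = x I - C` this is,
up to normalization, the value at `x` of the average of `χ(C + B E Bᵀ)`. -/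
def conjDetSum (B : ι → Matrix ν ν R) (A E : Matrix ν ν R) : R :=
  ∑ i, (A - B i * E * (B i)ᵀ).det

theorem conjDetSum_conj {G : Type*} [Group G] [Fintype G] (B : G →* Matrix ν ν R)
    (A E : Matrix ν ν R) (g : G) :
    conjDetSum B A (B g * E * (B g)ᵀ) = conjDetSum B A E := by
  refine Fintype.sum_equiv (Equiv.mulRight g) _ _ fun h => ?_
  simp only [Equiv.coe_mulRight, map_mul, Matrix.transpose_mul, Matrix.mul_assoc]

theorem exists_conjDetSum_commutator (B : ι → Matrix ν ν R) (A E : Matrix ν ν R) :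
    ∃ K : Matrix ν ν R, ∀ (c : R) (w : ν → R),
      conjDetSum B A ((1 - c • vecMulVec w w) * E) =
        conjDetSum B A (E * (1 - c • vecMulVec w w)) + c * (w ⬝ᵥ K *ᵥ w) := by
  let adj (i : ι) := (A - B i * E * (B i)ᵀ).adjugate
  refine ⟨∑ i, (E * (B i)ᵀ * adj i * B i - (B i)ᵀ * adj i * (B i * E)), fun c w => ?_⟩
  simp only [conjDetSum, sum_mulVec, dotProduct_sum, Finset.mul_sum, ← Finset.sum_add_distrib]
  refine Finset.sum_congr rfl fun i _ => ?_
  have hleft := det_sub_mul_one_sub_smul_vecMulVec_mul A (B i) (E * (B i)ᵀ) c w w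
  have hright := det_sub_mul_one_sub_smul_vecMulVec_mul A (B i * E) (B i)ᵀ c w w
  simp only [← Matrix.mul_assoc] at hleft hright ⊢
  rw [hleft, hright, sub_mulVec, dotProduct_sub]
  ring

end ConjDetSum

section BlkDiagOne

variable {R κ ν : Type*} [CommRing R] [Fintype κ] [Fintype ν]

theorem sumElim_zero_dotProduct_mulVec (K : Matrix (κ ⊕ ν) (κ ⊕ ν) R) (w : κ → R) :
    Sum.elim w 0 ⬝ᵥ K *ᵥ Sum.elim w 0 = w ⬝ᵥ K.toBlocks₁₁ *ᵥ w := by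
  simp [dotProduct, mulVec, Fintype.sum_sum_type, toBlocks₁₁]

variable [DecidableEq κ] [DecidableEq ν]

variable (ν) in
/-- The embedding `Q ↦ Q ⊕ I`. -/
def blkDiagOne : Matrix κ κ R →* Matrix (κ ⊕ ν) (κ ⊕ ν) R where
  toFun Q := fromBlocks Q 0 0 1
  map_one' := fromBlocks_one
  map_mul' P Q := by simp [fromBlocks_multiply]

theorem blkDiagOne_transpose (Q : Matrix κ κ R) : (blkDiagOne ν Q)ᵀ = blkDiagOne ν Qᵀ := by
  simp [blkDiagOne, fromBlocks_transpose]

theorem blkDiagOne_one_sub_smul_vecMulVec (c : R) (w : κ → R) :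
    blkDiagOne ν (1 - c • vecMulVec w w) =
      1 - c • vecMulVec (Sum.elim w 0) (Sum.elim w 0) := by
  ext (i | i) (j | j) <;> simp [blkDiagOne, vecMulVec_apply, Matrix.one_apply]

theorem continuous_blkDiagOne [TopologicalSpace R] :
    Continuous (blkDiagOne ν : Matrix κ κ R →* Matrix (κ ⊕ ν) (κ ⊕ ν) R) :=
  continuous_id.matrix_fromBlocks continuous_const continuous_const continuous_const

end BlkDiagOne

section RootSquaresSpan

variable {R G κ ν : Type*} [CommRing R] [Group G] [Fintype κ] [DecidableEq κ]

/-- The squares of the roots `a` of the reflections `ρ g = 1 - a aᵀ`, for involutions `g`, span the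
symmetric square of the representation `ρ`. This is stated dually: a quadratic form vanishing at
these roots is zero. -/
def RootSquaresSpan (ρ : G →* Matrix κ κ R) : Prop :=
  ∀ K : Matrix κ κ R,
    (∀ (g : G) (a : κ → R), g * g = 1 → ρ g = 1 - vecMulVec a a → a ⬝ᵥ K *ᵥ a = 0) →
      ∀ w : κ → R, w ⬝ᵥ K *ᵥ w = 0

variable [Fintype G] [Fintype ν] [DecidableEq ν]

theorem conjDetSum_mul_comm {ρ : G →* Matrix κ κ R} (hρ : RootSquaresSpan ρ)
    (A E : Matrix (κ ⊕ ν) (κ ⊕ ν) R) (c : R) (w : κ → R) :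
    conjDetSum ((blkDiagOne ν).comp ρ) A (blkDiagOne ν (1 - c • vecMulVec w w) * E) =
      conjDetSum ((blkDiagOne ν).comp ρ) A (E * blkDiagOne ν (1 - c • vecMulVec w w)) := by
  set B := (blkDiagOne ν).comp ρ
  obtain ⟨K, hK⟩ := exists_conjDetSum_commutator B A E
  have hdefect (c : R) (w : κ → R) :
      conjDetSum B A (blkDiagOne ν (1 - c • vecMulVec w w) * E) =
        conjDetSum B A (E * blkDiagOne ν (1 - c • vecMulVec w w)) +
          c * (w ⬝ᵥ K.toBlocks₁₁ *ᵥ w) := by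
    rw [blkDiagOne_one_sub_smul_vecMulVec, hK, sumElim_zero_dotProduct_mulVec]
  have hroot (g : G) (a : κ → R) (hg : g * g = 1) (ha : ρ g = 1 - vecMulVec a a) :
      a ⬝ᵥ K.toBlocks₁₁ *ᵥ a = 0 := by
    have hsymm : (B g)ᵀ = B g := by
      simp [B, blkDiagOne_transpose, ha, transpose_vecMulVec]
    have hBg : blkDiagOne ν (ρ g) = B g := rfl
    have hcomm : conjDetSum B A (B g * E) = conjDetSum B A (E * B g) := by
      rw [← conjDetSum_conj B A (E * B g) g, hsymm, Matrix.mul_assoc, Matrix.mul_assoc, ← map_mul,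
        hg, map_one, Matrix.mul_one]
    have h := hdefect 1 a
    rwa [one_smul, ← ha, hBg, hcomm, one_mul, left_eq_add] at h
  rw [hdefect, hρ _ hroot, mul_zero, add_zero]

theorem conjDetSum_conj_householder {ρ : G →* Matrix κ κ ℝ} (hρ : RootSquaresSpan ρ)
    (A E : Matrix (κ ⊕ ν) (κ ⊕ ν) ℝ) (v : κ → ℝ) :
    conjDetSum ((blkDiagOne ν).comp ρ) A
        (blkDiagOne ν (householder v) * E * (blkDiagOne ν (householder v))ᵀ) =
      conjDetSum ((blkDiagOne ν).comp ρ) A E := by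
  rw [Matrix.mul_assoc, householder, conjDetSum_mul_comm hρ, ← householder, Matrix.mul_assoc,
    blkDiagOne_transpose, householder_transpose, ← map_mul, householder_mul_self, map_one,
    Matrix.mul_one]

theorem conjDetSum_conj_orthogonal {ρ : G →* Matrix κ κ ℝ} (hρ : RootSquaresSpan ρ)
    (A E : Matrix (κ ⊕ ν) (κ ⊕ ν) ℝ) {Q : Matrix κ κ ℝ} (hQ : Q ∈ orthogonalGroup κ ℝ) :
    conjDetSum ((blkDiagOne ν).comp ρ) A (blkDiagOne ν Q * E * (blkDiagOne ν Q)ᵀ) =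
      conjDetSum ((blkDiagOne ν).comp ρ) A E := by
  obtain ⟨l, rfl⟩ := exists_eq_prod_householder hQ
  clear hQ
  induction l with
  | nil => simp
  | cons v l ih =>
    refine Eq.trans ?_ ((conjDetSum_conj_householder hρ A _ v).trans ih)
    simp only [List.map_cons, List.prod_cons, map_mul, Matrix.transpose_mul, Matrix.mul_assoc]

theorem sum_charpoly_conj_orthogonal {ρ : G →* Matrix κ κ ℝ} (hρ : RootSquaresSpan ρ)
    (C D : Matrix (κ ⊕ ν) (κ ⊕ ν) ℝ) {Q : Matrix κ κ ℝ} (hQ : Q ∈ orthogonalGroup κ ℝ) :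
    ∑ g, (C + blkDiagOne ν (ρ g * Q) * D * (blkDiagOne ν (ρ g * Q))ᵀ).charpoly =
      ∑ g, (C + blkDiagOne ν (ρ g) * D * (blkDiagOne ν (ρ g))ᵀ).charpoly := by
  refine Polynomial.funext fun x => ?_
  have h := conjDetSum_conj_orthogonal hρ (scalar (κ ⊕ ν) x - C) D hQ
  simp only [conjDetSum, MonoidHom.comp_apply] at h
  simp only [eval_finsetSum, eval_charpoly, ← sub_sub]
  rw [← h]
  simp only [map_mul, Matrix.transpose_mul, Matrix.mul_assoc]

end RootSquaresSpan

section StandardRepresentation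

variable {R ι κ : Type*} [CommRing R] [Fintype ι] [Fintype κ] [DecidableEq κ]

theorem dotProduct_mulVec_self_eq_zero_of_roots [DecidableEq ι] [NoZeroDivisors R] [NeZero (2 : R)]
    {M : Matrix ι ι R}
    (hM : ∀ a b : ι, (Pi.single a 1 - Pi.single b 1) ⬝ᵥ
      M *ᵥ (Pi.single a 1 - Pi.single b 1) = 0)
    {x : ι → R} (hx : ∑ i, x i = 0) :
    x ⬝ᵥ M *ᵥ x = 0 := by
  have hpair (a b : ι) : M a b + M b a = M a a + M b b := by
    have h := hM a b
    simp only [mulVec_sub, mulVec_single_one, sub_dotProduct, dotProduct_sub,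
      single_one_dotProduct, col_apply] at h
    linear_combination -h
  have hform : x ⬝ᵥ M *ᵥ x = ∑ a, ∑ b, x a * M a b * x b := by
    simp only [dotProduct, mulVec, Finset.mul_sum, mul_assoc]
  have hform' : x ⬝ᵥ M *ᵥ x = ∑ a, ∑ b, x a * M b a * x b := by
    rw [hform, Finset.sum_comm]
    exact Finset.sum_congr rfl fun a _ => Finset.sum_congr rfl fun b _ => by ring
  have htwice : 2 * (x ⬝ᵥ M *ᵥ x) = 0 := calc
    2 * (x ⬝ᵥ M *ᵥ x) = ∑ a, ∑ b, x a * (M a b + M b a) * x b := by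
      simp only [mul_add, add_mul, Finset.sum_add_distrib, ← hform, ← hform', two_mul]
    _ = ∑ a, ∑ b, (x a * M a a * x b + x a * (x b * M b b)) := by
      refine Finset.sum_congr rfl fun a _ => Finset.sum_congr rfl fun b _ => ?_
      rw [hpair]
      ring
    _ = 0 := by
      simp only [Finset.sum_add_distrib, ← Finset.mul_sum, ← Finset.sum_mul, hx, mul_zero,
        zero_mul, Finset.sum_const_zero, add_zero]
  exact (mul_eq_zero.mp htwice).resolve_left two_ne_zero

/-- The columns of `V` form an orthonormal basis of the hyperplane `∑ xᵢ = 0`. -/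
structure IsHyperplaneFrame (V : Matrix ι κ R) : Prop where
  transpose_mul_self : Vᵀ * V = 1
  sum_apply : ∀ j, ∑ i, V i j = 0
  mulVec_transpose_mulVec : ∀ x : ι → R, ∑ i, x i = 0 → V *ᵥ (Vᵀ *ᵥ x) = x

theorem isHyperplaneFrame_submatrix_castSucc [NoZeroDivisors R] {r : ℕ}
    {U : Matrix (Fin (r + 1)) (Fin (r + 1)) R} (hU : Uᵀ * U = 1) {c : R} (hc : c ≠ 0)
    (hlast : ∀ i, U i (Fin.last r) = c) :
    IsHyperplaneFrame (U.submatrix id Fin.castSucc) where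
  transpose_mul_self := by
    ext i j
    have h := congrFun₂ hU i.castSucc j.castSucc
    simpa [Matrix.mul_apply, Matrix.one_apply] using h
  sum_apply j := by
    have h := congrFun₂ hU (Fin.last r) j.castSucc
    simp only [Matrix.mul_apply, transpose_apply, hlast, ← Finset.mul_sum,
      Matrix.one_apply_ne (Fin.castSucc_lt_last j).ne'] at h
    exact (mul_eq_zero.mp h).resolve_left hc
  mulVec_transpose_mulVec x hx := by
    have hlast_x : (Uᵀ *ᵥ x) (Fin.last r) = 0 := by
      simp [mulVec, dotProduct, hlast, ← Finset.mul_sum, hx]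
    have hUx : U *ᵥ (Uᵀ *ᵥ x) = x := by
      rw [mulVec_mulVec, mul_eq_one_comm.mp hU, one_mulVec]
    ext i
    rw [← congrFun hUx i, mulVec, mulVec, dotProduct, dotProduct, Fin.sum_univ_castSucc, hlast_x,
      mul_zero, add_zero]
    rfl

namespace IsHyperplaneFrame

variable {V : Matrix ι κ R}

theorem mul_transpose_mul (hV : IsHyperplaneFrame V) {X : Matrix ι κ R}
    (hX : ∀ j, ∑ i, X i j = 0) : V * (Vᵀ * X) = X := by
  ext i j
  exact congrFun (hV.mulVec_transpose_mulVec (X.col j) (hX j)) i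

variable [DecidableEq ι]

theorem sum_permMatrixHom_mul_apply_eq_zero (hV : IsHyperplaneFrame V) (σ : Equiv.Perm ι) (j : κ) :
    ∑ i, (permMatrixHom (R := R) σ * V) i j = 0 := by
  rw [permMatrixHom_apply, PEquiv.toMatrix_toPEquiv_mul, ← hV.sum_apply j]
  exact Equiv.sum_comp σ⁻¹ fun i => V i j

/-- The standard representation of `Equiv.Perm ι`: its permutation representation restricted to the
hyperplane `∑ xᵢ = 0`, in the coordinates given by the frame `V`. -/
def standardRep (hV : IsHyperplaneFrame V) : Equiv.Perm ι →* Matrix κ κ R where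
  toFun σ := Vᵀ * (permMatrixHom (R := R) σ * V)
  map_one' := by rw [map_one, Matrix.one_mul, hV.transpose_mul_self]
  map_mul' σ τ := by
    rw [map_mul, Matrix.mul_assoc Vᵀ, Matrix.mul_assoc _ V,
      hV.mul_transpose_mul (hV.sum_permMatrixHom_mul_apply_eq_zero τ), Matrix.mul_assoc]

theorem standardRep_apply (hV : IsHyperplaneFrame V) (σ : Equiv.Perm ι) :
    hV.standardRep σ = Vᵀ * (permMatrixHom (R := R) σ * V) :=
  rfl

theorem standardRep_transpose_mul_self (hV : IsHyperplaneFrame V) (σ : Equiv.Perm ι) :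
    (hV.standardRep σ)ᵀ * hV.standardRep σ = 1 := by
  have h : (hV.standardRep σ)ᵀ = hV.standardRep σ⁻¹ := by
    simp [standardRep_apply, Matrix.transpose_mul, Matrix.mul_assoc]
  rw [h, ← map_mul, inv_mul_cancel, map_one]

theorem standardRep_swap (hV : IsHyperplaneFrame V) (a b : ι) :
    hV.standardRep (Equiv.swap a b) =
      1 - vecMulVec (Vᵀ *ᵥ (Pi.single a 1 - Pi.single b 1))
        (Vᵀ *ᵥ (Pi.single a 1 - Pi.single b 1)) := by
  have hswap : permMatrixHom (R := R) (Equiv.swap a b) =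
      1 - vecMulVec (Pi.single a 1 - Pi.single b 1) (Pi.single a 1 - Pi.single b 1) := by
    ext i j
    simp only [permMatrixHom_apply, PEquiv.toMatrix_apply, Equiv.swap_inv, Equiv.toPEquiv_apply,
      Option.mem_some_iff, Matrix.sub_apply, Matrix.one_apply, vecMulVec_apply,
      Pi.sub_apply, Pi.single_apply, Equiv.swap_apply_def]
    split_ifs <;> grind
  rw [standardRep_apply, hswap, Matrix.sub_mul, Matrix.mul_sub, Matrix.one_mul,
    hV.transpose_mul_self, vecMulVec_mul, mul_vecMulVec, ← mulVec_transpose]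

theorem rootSquaresSpan_standardRep [NoZeroDivisors R] [NeZero (2 : R)]
    (hV : IsHyperplaneFrame V) : RootSquaresSpan hV.standardRep := by
  intro K hK w
  have hpull (x : ι → R) : x ⬝ᵥ (V * K * Vᵀ) *ᵥ x = (Vᵀ *ᵥ x) ⬝ᵥ K *ᵥ (Vᵀ *ᵥ x) := by
    rw [← mulVec_mulVec, ← mulVec_mulVec, dotProduct_mulVec, mulVec_transpose]
  have hsum : ∑ i, (V *ᵥ w) i = 0 := by
    simp only [mulVec, dotProduct]
    rw [Finset.sum_comm]
    simp [← Finset.sum_mul, hV.sum_apply]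
  have hw : Vᵀ *ᵥ (V *ᵥ w) = w := by
    rw [mulVec_mulVec, hV.transpose_mul_self, one_mulVec]
  rw [← hw, ← hpull]
  refine dotProduct_mulVec_self_eq_zero_of_roots (fun a b => ?_) hsum
  rw [hpull]
  exact hK _ _ (Equiv.swap_mul_self a b) (hV.standardRep_swap a b)

end IsHyperplaneFrame

end StandardRepresentation

section HaarOrthogonal

theorem continuous_charpoly_coeff {R ν : Type*} [CommRing R] [TopologicalSpace R]
    [IsTopologicalRing R] [Fintype ν] [DecidableEq ν] (t : ℕ) :
    Continuous fun M : Matrix ν ν R => M.charpoly.coeff t := by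
  have h (M : Matrix ν ν R) : M.charpoly.coeff t =
      MvPolynomial.eval (fun p : ν × ν => M p.1 p.2) ((charpoly.univ R ν).coeff t) :=
    (charpoly.univ_coeff_eval₂Hom ν (RingHom.id R) (fun p => M p.1 p.2) t).symm
  simp only [h]
  exact (MvPolynomial.continuous_eval _).comp (by fun_prop)

theorem isCompact_orthogonalGroup (κ : Type*) [Fintype κ] [DecidableEq κ] :
    IsCompact (orthogonalGroup κ ℝ : Set (Matrix κ κ ℝ)) := by
  have hbox : IsCompact (Set.univ.pi fun _ => Set.univ.pi fun _ => Set.Icc (-1) 1 :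
      Set (κ → κ → ℝ)) :=
    isCompact_univ_pi fun _ => isCompact_univ_pi fun _ => isCompact_Icc
  have hclosed : IsClosed (orthogonalGroup κ ℝ : Set (Matrix κ κ ℝ)) := isClosed_unitary
  exact hbox.of_isClosed_subset hclosed fun Q hQ i _ j _ =>
    abs_le.mp (entry_norm_bound_of_unitary hQ i j)

instance matBorelSpace (m n : ℕ) : BorelSpace (Matrix (Fin m) (Fin n) ℝ) :=
  inferInstanceAs (BorelSpace (Fin m → Fin n → ℝ))

namespace IsHaarOrthogonal

variable {s : ℕ} {μ : Measure (Matrix (Fin s) (Fin s) ℝ)} {f : Matrix (Fin s) (Fin s) ℝ → ℝ}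

theorem ae_mem_orthogonalGroup (hμ : IsHaarOrthogonal μ) :
    ∀ᵐ Q ∂μ, Q ∈ orthogonalGroup (Fin s) ℝ :=
  hμ.2.1.mono fun _ => (mem_orthogonalGroup_iff' (Fin s) ℝ).mpr

theorem integrable_of_continuous (hμ : IsHaarOrthogonal μ) (hf : Continuous f) :
    Integrable f μ := by
  have := hμ.1
  have h : IntegrableOn f (orthogonalGroup (Fin s) ℝ : Set (Matrix (Fin s) (Fin s) ℝ)) μ :=
    hf.continuousOn.integrableOn_compact (isCompact_orthogonalGroup (Fin s))
  rwa [IntegrableOn, Measure.restrict_eq_self_of_ae_mem hμ.ae_mem_orthogonalGroup] at h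

theorem integral_mul_left (hμ : IsHaarOrthogonal μ) (hf : Continuous f)
    {P : Matrix (Fin s) (Fin s) ℝ} (hP : Pᵀ * P = 1) :
    ∫ Q, f (P * Q) ∂μ = ∫ Q, f Q ∂μ := by
  have hmul : Continuous fun Q : Matrix (Fin s) (Fin s) ℝ => P * Q := by fun_prop
  conv_rhs => rw [← hμ.2.2 P hP]
  exact (integral_map hmul.aemeasurable hf.aestronglyMeasurable).symm

theorem sum_eq_card_mul_integral (hμ : IsHaarOrthogonal μ) (hf : Continuous f) {ι : Type*}
    [Fintype ι] {P : ι → Matrix (Fin s) (Fin s) ℝ} (hP : ∀ i, (P i)ᵀ * P i = 1)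
    (hinv : ∀ Q ∈ orthogonalGroup (Fin s) ℝ, ∑ i, f (P i * Q) = ∑ i, f (P i)) :
    ∑ i, f (P i) = Fintype.card ι * ∫ Q, f Q ∂μ := by
  have := hμ.1
  calc ∑ i, f (P i) = ∫ _, ∑ i, f (P i) ∂μ := by simp
    _ = ∫ Q, ∑ i, f (P i * Q) ∂μ :=
      integral_congr_ae <| hμ.ae_mem_orthogonalGroup.mono fun Q hQ => (hinv Q hQ).symm
    _ = ∑ i, ∫ Q, f (P i * Q) ∂μ :=
      integral_finsetSum _ fun i _ => hμ.integrable_of_continuous (hf.comp (by fun_prop))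
    _ = Fintype.card ι * ∫ Q, f Q ∂μ := by
      simp only [hμ.integral_mul_left hf (hP _), Finset.sum_const, Finset.card_univ, nsmul_eq_mul]

theorem sum_charpoly_coeff_eq_card_mul_integral (hμ : IsHaarOrthogonal μ) {G ν : Type*} [Group G]
    [Fintype G] [Fintype ν] [DecidableEq ν] {ρ : G →* Matrix (Fin s) (Fin s) ℝ}
    (horth : ∀ g, (ρ g)ᵀ * ρ g = 1) (hspan : RootSquaresSpan ρ)
    (C D : Matrix (Fin s ⊕ ν) (Fin s ⊕ ν) ℝ) (t : ℕ) :
    ∑ g, (C + blkDiagOne ν (ρ g) * D * (blkDiagOne ν (ρ g))ᵀ).charpoly.coeff t =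
      Fintype.card G *
        ∫ Q, (C + blkDiagOne ν Q * D * (blkDiagOne ν Q)ᵀ).charpoly.coeff t ∂μ := by
  have hcont : Continuous fun Q : Matrix (Fin s) (Fin s) ℝ =>
      (C + blkDiagOne ν Q * D * (blkDiagOne ν Q)ᵀ).charpoly.coeff t := by
    have := continuous_blkDiagOne (R := ℝ) (κ := Fin s) (ν := ν)
    exact (continuous_charpoly_coeff t).comp (by fun_prop)
  refine hμ.sum_eq_card_mul_integral hcont horth fun Q hQ => ?_
  simpa only [finsetSum_coeff] using
    congrArg (fun p => p.coeff t) (sum_charpoly_conj_orthogonal hspan C D hQ)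

end IsHaarOrthogonal

end HaarOrthogonal

theorem permMat_eq_permMatrixHom {N : ℕ} (σ : Equiv.Perm (Fin N)) :
    permMat σ = permMatrixHom σ := by
  ext i j
  simp [permMat, PEquiv.toMatrix_apply, Equiv.toPEquiv_apply, Equiv.eq_symm_apply, eq_comm]

theorem perm_quadrature_eq_orthogonal_quadrature_general
    (r k : ℕ) (C D : Matrix (Fin r ⊕ Fin k) (Fin r ⊕ Fin k) ℝ)
    (U : Matrix (Fin (r + 1)) (Fin (r + 1)) ℝ)
    (hU : Uᵀ * U = 1)
    (hUones : ∀ i : Fin (r + 1), U i (Fin.last r) = (Real.sqrt (r + 1))⁻¹)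
    (μ : Measure (Matrix (Fin r) (Fin r) ℝ)) (hμ : IsHaarOrthogonal μ) :
    let Phat : Equiv.Perm (Fin (r + 1)) → Matrix (Fin r) (Fin r) ℝ :=
      fun σ => Matrix.of fun i j => (Uᵀ * permMat σ * U) (Fin.castSucc i) (Fin.castSucc j)
    ∀ t : ℕ,
      ((r + 1).factorial : ℝ)⁻¹ *
        ∑ σ : Equiv.Perm (Fin (r + 1)),
          (C + blkDiag (Phat σ) 1 * D * (blkDiag (Phat σ) 1)ᵀ).charpoly.coeff t =
      ∫ Q, (C + blkDiag Q 1 * D * (blkDiag Q 1)ᵀ).charpoly.coeff t ∂μ := by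
  intro Phat t
  have hlast : (Real.sqrt (r + 1))⁻¹ ≠ 0 := by positivity
  have hV := isHyperplaneFrame_submatrix_castSucc hU hlast hUones
  have hPhat (σ : Equiv.Perm (Fin (r + 1))) : Phat σ = hV.standardRep σ := by
    ext i j
    rw [hV.standardRep_apply, ← permMat_eq_permMatrixHom, ← Matrix.mul_assoc]
    simp [Phat, Matrix.mul_apply]
  have h := hμ.sum_charpoly_coeff_eq_card_mul_integral hV.standardRep_transpose_mul_self
    hV.rootSquaresSpan_standardRep C D t
  simp only [← hPhat, Fintype.card_perm, Fintype.card_fin] at h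
  rw [inv_mul_eq_iff_eq_mul₀ (by positivity)]
  exact h

/-- **Permutation quadrature equals orthogonal quadrature** (extension of
MSS Corollary 4.12 / Cohen's lemma).  For `(m+n) × (m+n)` symmetric matrices `C, D`,
`r < m`, an orthogonal `U ∈ O(r+1)` whose last column is the normalized all-ones vector,
and `P̂` the top-left `r × r` block of `Uᵀ P U` (so that `Uᵀ P U = P̂ ⊕ 1`):
`E_{P uniform permutation}[χ(C + (P̂ ⊕ I)·D·(P̂ ⊕ I)ᵀ)]
  = E_{Q Haar on O(r)}[χ(C + (Q ⊕ I)·D·(Q ⊕ I)ᵀ)]` (coefficientwise). -/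
theorem perm_quadrature_eq_orthogonal_quadrature
    (m n r : ℕ) (hm : 0 < m) (hn : 0 < n) (hr : r < m)
    (C D : Matrix (Fin r ⊕ Fin (m + n - r)) (Fin r ⊕ Fin (m + n - r)) ℝ)
    (hC : C.IsSymm) (hD : D.IsSymm)
    (U : Matrix (Fin (r + 1)) (Fin (r + 1)) ℝ)
    (hU : Uᵀ * U = 1)
    (hUones : ∀ i : Fin (r + 1), U i (Fin.last r) = (Real.sqrt (r + 1))⁻¹)
    (μ : Measure (Matrix (Fin r) (Fin r) ℝ)) (hμ : IsHaarOrthogonal μ) :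
    let Phat : Equiv.Perm (Fin (r + 1)) → Matrix (Fin r) (Fin r) ℝ :=
      fun σ => Matrix.of fun i j => (Uᵀ * permMat σ * U) (Fin.castSucc i) (Fin.castSucc j)
    ∀ t : ℕ,
      (((r + 1).factorial : ℝ))⁻¹ *
        ∑ σ : Equiv.Perm (Fin (r + 1)),
          (Matrix.charpoly
            (C + blkDiag (Phat σ) (1 : Matrix (Fin (m + n - r)) (Fin (m + n - r)) ℝ) * D *
              (blkDiag (Phat σ) (1 : Matrix (Fin (m + n - r)) (Fin (m + n - r)) ℝ))ᵀ)).coeff t =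
      ∫ Q, (Matrix.charpoly
          (C + blkDiag Q (1 : Matrix (Fin (m + n - r)) (Fin (m + n - r)) ℝ) * D *
            (blkDiag Q (1 : Matrix (Fin (m + n - r)) (Fin (m + n - r)) ℝ))ᵀ)).coeff t ∂μ :=
  perm_quadrature_eq_orthogonal_quadrature_general r (m + n - r) C D U hU hUones μ hμ
end

section
/- Fix integers c, d ≥ 2 and a real number θ, and let G₁, G₂, … be a sequence of (c,d)-biregular bipartite graphs whose numbers of vertices tend to infinity. If the second largest eigenvalue of the adjacency matrix of Gᵢ is at most θ for every i, then θ ≥ √(c−1) + √(d−1). -/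
open Polynomial Matrix Filter

/-- The `j`-th largest root (counted with multiplicity, `j = 1` being the largest)
of a real polynomial. -/
noncomputable def nthLargestRoot (p : Polynomial ℝ) (j : ℕ) : ℝ :=
  (p.roots.sort (· ≤ ·)).getD (Multiset.card p.roots - j) 0

/-- The `j`-th largest eigenvalue of a (symmetric) real matrix, as the `j`-th largest
root of its characteristic polynomial `det(x·I − M)`. -/
noncomputable def nthLargestEig {N : Type*} [Fintype N] [DecidableEq N]
    (M : Matrix N N ℝ) (j : ℕ) : ℝ :=
  nthLargestRoot M.charpoly j

/-! In a `(c, d)`-biregular bipartite graph the matrices counting nonbacktracking walks of length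
`2 k` obey under multiplication by `M = A Aᵀ` the same three-term recurrence as the spheres of
radius `2 k` in the biregular tree. A truncated radial eigenfunction of the tree, with weights
`sin (k π / (j + 2)) / √((c - 1) (d - 1)) ^ k`, thus gives at any vertex a nonnegative `f` with
`M f ≥ lam f` entrywise, where `lam` tends to `(√(c - 1) + √(d - 1))²` as `j` grows, while `∑ f` is
independent of the graph and `f ⬝ᵥ f` is bounded below. A second eigenvalue at most `θ` bounds the
quadratic form of `M` by `θ²` on vectors orthogonal to the constants; if `θ² < lam`, then applying
this to the projection of `f` bounds the number of vertices. -/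

section SecondEigenvalue

variable {N : Type*} [Fintype N] [DecidableEq N] {M : Matrix N N ℝ} {θ μ : ℝ} {x y : N → ℝ}

lemma nthLargestEig_eq_eigenvalues₀ (hM : M.IsHermitian) (k : Fin (Fintype.card N)) :
    nthLargestEig M (k + 1) = hM.eigenvalues₀ k := by
  have hperm : M.charpoly.roots.sort (· ≤ ·) = (List.ofFn hM.eigenvalues₀).reverse := by
    refine List.Perm.eq_reverse_of_sortedLE_of_sortedGE ?_
      (Multiset.pairwise_sort _ _).sortedLE hM.eigenvalues₀_antitone.sortedGE_ofFn
    rw [← Multiset.coe_eq_coe, Multiset.sort_eq, hM.roots_charpoly_eq_eigenvalues₀,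
      Fin.univ_val_map]
    rfl
  have hcard : M.charpoly.roots.card = Fintype.card N := by
    simp [hM.roots_charpoly_eq_eigenvalues₀]
  have hlt : Fintype.card N - (k + 1) < (List.ofFn hM.eigenvalues₀).reverse.length := by
    rw [List.length_reverse, List.length_ofFn]
    omega
  rw [nthLargestEig, nthLargestRoot, hperm, hcard, List.getD_eq_getElem _ _ hlt]
  simp only [List.getElem_reverse, List.getElem_ofFn, List.length_ofFn]
  congr
  omega

lemma eq_of_nthLargestEig_two_lt_eigenvalues (hM : M.IsHermitian) {i j : N}
    (hi : nthLargestEig M 2 < hM.eigenvalues i) (hj : nthLargestEig M 2 < hM.eigenvalues j) :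
    i = j := by
  have hzero (k : Fin (Fintype.card N)) (hk : nthLargestEig M 2 < hM.eigenvalues₀ k) :
      (k : ℕ) = 0 := by
    by_contra hk0
    let one : Fin (Fintype.card N) := ⟨1, by omega⟩
    have hle : hM.eigenvalues₀ k ≤ hM.eigenvalues₀ one :=
      hM.eigenvalues₀_antitone (Fin.le_def.2 (Nat.one_le_iff_ne_zero.2 hk0))
    exact (hle.trans_eq (nthLargestEig_eq_eigenvalues₀ hM one).symm).not_gt hk
  exact (Equiv.injective _) (Fin.ext ((hzero _ hi).trans (hzero _ hj).symm))

lemma transpose_mulVec_dotProduct_transpose_mulVec {O : Matrix N N ℝ}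
    (hO : O ∈ Matrix.unitaryGroup N ℝ) (x y : N → ℝ) : (Oᵀ *ᵥ x) ⬝ᵥ (Oᵀ *ᵥ y) = x ⬝ᵥ y := by
  rw [mulVec_transpose, ← dotProduct_mulVec, mulVec_mulVec,
    ← conjTranspose_eq_transpose_of_trivial, ← star_eq_conjTranspose,
    Unitary.mul_star_self_of_mem hO, one_mulVec]

lemma eigenvectorUnitary_transpose_mulVec_mulVec (hM : M.IsHermitian) (x : N → ℝ) (i : N) :
    ((hM.eigenvectorUnitary : Matrix N N ℝ)ᵀ *ᵥ (M *ᵥ x)) i =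
      hM.eigenvalues i * ((hM.eigenvectorUnitary : Matrix N N ℝ)ᵀ *ᵥ x) i := by
  have hdiag : (hM.eigenvectorUnitary : Matrix N N ℝ)ᵀ * M =
      diagonal hM.eigenvalues * (hM.eigenvectorUnitary : Matrix N N ℝ)ᵀ := by
    have hspec := hM.conjStarAlgAut_star_eigenvectorUnitary
    rw [Unitary.conjStarAlgAut_star_apply] at hspec
    rw [← conjTranspose_eq_transpose_of_trivial, ← star_eq_conjTranspose]
    change _ = diagonal (RCLike.ofReal ∘ hM.eigenvalues) * _
    rw [← hspec, Matrix.mul_assoc, Unitary.mul_star_self_of_mem hM.eigenvectorUnitary.2,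
      Matrix.mul_one]
  rw [mulVec_mulVec, hdiag, ← mulVec_mulVec, mulVec_diagonal]

lemma dotProduct_mulVec_le_of_orthogonal_eigenvector (hM : M.IsHermitian)
    (hθ : nthLargestEig M 2 ≤ θ) (hx : M *ᵥ x = μ • x) (hx0 : x ≠ 0) (hθμ : θ < μ)
    (hxy : x ⬝ᵥ y = 0) : y ⬝ᵥ M *ᵥ y ≤ θ * (y ⬝ᵥ y) := by
  set O := (hM.eigenvectorUnitary : Matrix N N ℝ)
  have hO (u v : N → ℝ) : (Oᵀ *ᵥ u) ⬝ᵥ (Oᵀ *ᵥ v) = u ⬝ᵥ v :=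
    transpose_mulVec_dotProduct_transpose_mulVec hM.eigenvectorUnitary.2 u v
  have hOM (u : N → ℝ) (i : N) : (Oᵀ *ᵥ (M *ᵥ u)) i = hM.eigenvalues i * (Oᵀ *ᵥ u) i :=
    eigenvectorUnitary_transpose_mulVec_mulVec hM u i
  have hx_coord (i : N) (hi : hM.eigenvalues i ≤ θ) : (Oᵀ *ᵥ x) i = 0 := by
    have h := hOM x i
    rw [hx, mulVec_smul, Pi.smul_apply, smul_eq_mul] at h
    exact (mul_eq_mul_right_iff.1 h).resolve_left (hi.trans_lt hθμ).ne'
  have hy_coord (i : N) (hi : θ < hM.eigenvalues i) : (Oᵀ *ᵥ y) i = 0 := by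
    have hx_single (v : N → ℝ) : x ⬝ᵥ v = (Oᵀ *ᵥ x) i * (Oᵀ *ᵥ v) i := by
      rw [← hO, dotProduct, Finset.sum_eq_single_of_mem i (Finset.mem_univ i)]
      intro j _ hji
      rw [hx_coord j, zero_mul]
      by_contra! hj
      exact hji (eq_of_nthLargestEig_two_lt_eigenvalues hM (hθ.trans_lt hj) (hθ.trans_lt hi))
    rw [hx_single] at hxy
    refine (mul_eq_zero.1 hxy).resolve_left fun hxi => hx0 (dotProduct_self_eq_zero.1 ?_)
    rw [hx_single, hxi, zero_mul]
  rw [← hO y (M *ᵥ y), ← hO y y, dotProduct, dotProduct, Finset.mul_sum]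
  refine Finset.sum_le_sum fun i _ => ?_
  rw [hOM]
  rcases le_or_gt (hM.eigenvalues i) θ with hi | hi
  · linarith [mul_le_mul_of_nonneg_right hi (mul_self_nonneg ((Oᵀ *ᵥ y) i))]
  · simp [hy_coord i hi]

end SecondEigenvalue

lemma isHermitian_fromBlocks_zero_transpose {V U : Type*} (A : Matrix V U ℝ) :
    (fromBlocks 0 A Aᵀ 0).IsHermitian :=
  isHermitian_zero.fromBlocks (conjTranspose_eq_transpose_of_trivial A) isHermitian_zero

lemma fromBlocks_zero_transpose_mulVec_elim {V U : Type*} [Fintype V] [Fintype U]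
    (A : Matrix V U ℝ) (f : V → ℝ) (g : U → ℝ) :
    fromBlocks 0 A Aᵀ 0 *ᵥ Sum.elim f g = Sum.elim (A *ᵥ g) (Aᵀ *ᵥ f) := by
  simp [fromBlocks_mulVec]

/-- The test vector `(θ f, Aᵀ f)` turns the bound on the bipartite adjacency matrix into one on
`A Aᵀ`. -/
lemma dotProduct_mul_transpose_mulVec_le {V U : Type*} [Fintype V] [Fintype U] [DecidableEq V]
    [DecidableEq U] {A : Matrix V U ℝ} {c d θ : ℝ} (hrow : A *ᵥ 1 = c • 1) (hcol : Aᵀ *ᵥ 1 = d • 1)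
    (hθ : nthLargestEig (fromBlocks 0 A Aᵀ 0) 2 ≤ θ) (hθ0 : 0 < θ) (hθcd : θ < √c * √d)
    {f : V → ℝ} (hf : 1 ⬝ᵥ f = 0) : f ⬝ᵥ (A * Aᵀ) *ᵥ f ≤ θ ^ 2 * (f ⬝ᵥ f) := by
  rcases isEmpty_or_nonempty V with hV | ⟨⟨v⟩⟩
  · simp [dotProduct]
  have hc : 0 < √c := pos_of_mul_pos_left (hθ0.trans hθcd) (Real.sqrt_nonneg d)
  have hd : 0 < √d := pos_of_mul_pos_right (hθ0.trans hθcd) (Real.sqrt_nonneg c)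
  set x : V ⊕ U → ℝ := Sum.elim (√c • 1) (√d • 1)
  set y : V ⊕ U → ℝ := Sum.elim (θ • f) (Aᵀ *ᵥ f)
  have hx : fromBlocks 0 A Aᵀ 0 *ᵥ x = (√c * √d) • x := by
    have hcc : √c * √c = c := Real.mul_self_sqrt (Real.sqrt_pos.1 hc).le
    have hdd : √d * √d = d := Real.mul_self_sqrt (Real.sqrt_pos.1 hd).le
    rw [fromBlocks_zero_transpose_mulVec_elim, mulVec_smul, mulVec_smul, hrow, hcol]
    ext (a | b) <;>
      simp only [x, Sum.elim_inl, Sum.elim_inr, Pi.smul_apply, smul_eq_mul, Pi.one_apply]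
    · linear_combination -√d * hcc
    · linear_combination -√c * hdd
  have hx0 : x ≠ 0 := fun h => hc.ne' (by simpa [x] using congrFun h (Sum.inl v))
  have hxy : x ⬝ᵥ y = 0 := by
    rw [sumElim_dotProduct_sumElim, dotProduct_mulVec, vecMul_transpose, mulVec_smul, hrow]
    simp [hf]
  have hAf : f ⬝ᵥ (A * Aᵀ) *ᵥ f = (Aᵀ *ᵥ f) ⬝ᵥ (Aᵀ *ᵥ f) := by
    rw [← mulVec_mulVec, dotProduct_mulVec, ← mulVec_transpose]
  have hyy : y ⬝ᵥ y = θ ^ 2 * (f ⬝ᵥ f) + f ⬝ᵥ (A * Aᵀ) *ᵥ f := by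
    simp only [y, sumElim_dotProduct_sumElim, smul_dotProduct, dotProduct_smul, smul_eq_mul, hAf]
    ring
  have hyBy : y ⬝ᵥ fromBlocks 0 A Aᵀ 0 *ᵥ y = 2 * θ * (f ⬝ᵥ (A * Aᵀ) *ᵥ f) := by
    rw [fromBlocks_zero_transpose_mulVec_elim, sumElim_dotProduct_sumElim, mulVec_mulVec,
      mulVec_smul, smul_dotProduct, dotProduct_smul, ← hAf, smul_eq_mul]
    ring
  have hy := dotProduct_mulVec_le_of_orthogonal_eigenvector
    (isHermitian_fromBlocks_zero_transpose A) hθ hx hx0 hθcd hxy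
  rw [hyy, hyBy] at hy
  exact le_of_mul_le_mul_left (by linarith) hθ0

lemma card_mul_dotProduct_self_le {V : Type*} [Fintype V] {M : Matrix V V ℝ} {f : V → ℝ}
    {ν lam τ : ℝ} (hM : Mᵀ = M) (hM1 : M *ᵥ 1 = ν • 1)
    (hτ : ∀ g : V → ℝ, 1 ⬝ᵥ g = 0 → g ⬝ᵥ M *ᵥ g ≤ τ * (g ⬝ᵥ g))
    (hf : lam * (f ⬝ᵥ f) ≤ f ⬝ᵥ M *ᵥ f) :
    (lam - τ) * (f ⬝ᵥ f) * Fintype.card V ≤ (ν - τ) * (1 ⬝ᵥ f) ^ 2 := by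
  rcases isEmpty_or_nonempty V with hV | hV
  · simp [dotProduct]
  set n := (Fintype.card V : ℝ)
  have hn : 0 < n := Nat.cast_pos.2 Fintype.card_pos
  have h11 : (1 : V → ℝ) ⬝ᵥ 1 = n := by simp [dotProduct, n]
  have h1Mf : 1 ⬝ᵥ M *ᵥ f = ν * (1 ⬝ᵥ f) := by
    rw [dotProduct_mulVec, ← mulVec_transpose, hM, hM1, smul_dotProduct, smul_eq_mul]
  have key := hτ (n • f - (1 ⬝ᵥ f) • 1) (by
    simp only [dotProduct_sub, dotProduct_smul, smul_eq_mul, h11]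
    ring)
  simp only [mulVec_sub, mulVec_smul, dotProduct_sub, sub_dotProduct, dotProduct_smul,
    smul_dotProduct, smul_eq_mul, hM1, h11, h1Mf, dotProduct_comm f 1] at key
  refine le_of_mul_le_mul_left ?_ hn
  nlinarith [mul_le_mul_of_nonneg_left hf (sq_nonneg n)]

section NonbacktrackingWalks

variable {V U E : Type*} [DecidableEq V] [DecidableEq U]

/-- The vertex–edge incidence matrix of a family of edges with endpoints `s e`. A bipartite
multigraph is a pair of such maps `s : E → V` and `t : E → U` on the same edges; its biadjacency
matrix is `incidence s * (incidence t)ᵀ`. -/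
def incidence (s : E → V) : Matrix V E ℝ :=
  (1 : Matrix V V ℝ).submatrix id s

lemma incidence_nonneg (s : E → V) (v : V) (e : E) : 0 ≤ incidence s v e := by
  rw [incidence, submatrix_apply, one_apply]
  positivity

lemma one_vecMul_incidence [Fintype V] (s : E → V) : 1 ᵥ* incidence s = 1 := by
  ext e
  simp [incidence, vecMul, dotProduct, one_apply]

lemma incidence_mul_transpose_incidence [Fintype E] {s : E → V} {c : ℝ}
    (hs : incidence s *ᵥ 1 = c • 1) : incidence s * (incidence s)ᵀ = c • 1 := by
  ext v w
  have hv := congrFun hs v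
  simp only [incidence, mulVec, dotProduct, submatrix_apply, id_eq, one_apply, Pi.one_apply,
    mul_one, Pi.smul_apply, smul_eq_mul] at hv
  simp only [incidence, mul_apply, transpose_apply, submatrix_apply, id_eq, Matrix.smul_apply,
    one_apply, smul_eq_mul]
  rcases eq_or_ne v w with rfl | hvw
  · rw [if_pos rfl, mul_one, ← hv]
    exact Finset.sum_congr rfl fun e _ => by split_ifs <;> simp
  · rw [if_neg hvw, mul_zero]
    refine Finset.sum_eq_zero fun e _ => ?_
    grind

variable [DecidableEq E]

/-- The adjacency matrix of the relation "distinct edges with the same endpoint under `s`". -/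
def edgeAdj (s : E → V) : Matrix E E ℝ :=
  (1 : Matrix V V ℝ).submatrix s s - 1

lemma edgeAdj_nonneg (s : E → V) (e f : E) : 0 ≤ edgeAdj s e f := by
  rw [edgeAdj, Matrix.sub_apply, submatrix_apply, one_apply, one_apply]
  grind

lemma transpose_incidence_mul_incidence [Fintype V] (s : E → V) :
    (incidence s)ᵀ * incidence s = 1 + edgeAdj s := by
  rw [incidence, edgeAdj, transpose_submatrix, transpose_one,
    ← submatrix_mul _ _ _ _ _ Function.bijective_id, Matrix.one_mul, add_sub_cancel]

variable [Fintype E]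

/-- Entry `(v, w)` counts the nonbacktracking walks of length `2 k` from `v` to `w` in the
bipartite multigraph with edge endpoints `s` and `t`: a walk is a sequence of edges, consecutive
ones being distinct and sharing alternately their `t`- and their `s`-endpoint. -/
def nbWalk (s : E → V) (t : E → U) : ℕ → Matrix V V ℝ
  | 0 => 1
  | k + 1 => incidence s * ((edgeAdj t * edgeAdj s) ^ k * edgeAdj t * (incidence s)ᵀ)

/-- The number of nonbacktracking walks of length `2 k` ending at a given vertex of degree `c` in a
`(c, d)`-biregular bipartite multigraph. -/
def nbWalkCount (c d : ℝ) : ℕ → ℝ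
  | 0 => 1
  | k + 1 => c * (d - 1) * ((c - 1) * (d - 1)) ^ k

lemma mul_apply_nonneg {X Y Z : Type*} [Fintype Y] {P : Matrix X Y ℝ} {Q : Matrix Y Z ℝ}
    (hP : ∀ x y, 0 ≤ P x y) (hQ : ∀ y z, 0 ≤ Q y z) (x : X) (z : Z) : 0 ≤ (P * Q) x z :=
  dotProduct_nonneg_of_nonneg (hP x) fun y => hQ y z

lemma nbWalk_nonneg (s : E → V) (t : E → U) (k : ℕ) (v w : V) : 0 ≤ nbWalk s t k v w := by
  cases k with
  | zero =>
    rw [nbWalk, one_apply]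
    positivity
  | succ k =>
    exact mul_apply_nonneg (incidence_nonneg s) (mul_apply_nonneg (mul_apply_nonneg
      (pow_apply_nonneg (mul_apply_nonneg (edgeAdj_nonneg t) (edgeAdj_nonneg s)) k)
      (edgeAdj_nonneg t)) fun e w => incidence_nonneg s w e) v w

variable {s : E → V} {t : E → U} {c d : ℝ}

lemma biadjacency_mul_transpose [Fintype U] {A : Matrix V U ℝ}
    (hA : A = incidence s * (incidence t)ᵀ) :
    A * Aᵀ = incidence s * (1 + edgeAdj t) * (incidence s)ᵀ := by
  rw [hA, transpose_mul, transpose_transpose, ← transpose_incidence_mul_incidence]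
  simp only [Matrix.mul_assoc]

lemma incidence_mul_edgeAdj (hs : incidence s *ᵥ 1 = c • 1) :
    incidence s * edgeAdj s = (c - 1) • incidence s := by
  have hmul : incidence s * (incidence s)ᵀ.submatrix id s = c • incidence s :=
    congrArg (submatrix · id s) (incidence_mul_transpose_incidence hs)
  have hsub : (1 : Matrix V V ℝ).submatrix s s = (incidence s)ᵀ.submatrix id s := by
    rw [incidence, transpose_submatrix, transpose_one, submatrix_submatrix]
    rfl
  rw [edgeAdj, Matrix.mul_sub, hsub, hmul, Matrix.mul_one, sub_smul, one_smul]

lemma edgeAdj_mul_self (hs : incidence s *ᵥ 1 = c • 1) :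
    edgeAdj s * edgeAdj s = (c - 2) • edgeAdj s + (c - 1) • 1 := by
  have hmul : (1 : Matrix V V ℝ).submatrix s s * edgeAdj s =
      (c - 1) • (1 : Matrix V V ℝ).submatrix s s :=
    congrArg (submatrix · s id) (incidence_mul_edgeAdj hs)
  rw [← sub_add_cancel ((1 : Matrix V V ℝ).submatrix s s) 1, ← edgeAdj, Matrix.add_mul,
    Matrix.one_mul] at hmul
  rw [eq_sub_of_add_eq hmul]
  module

lemma one_vecMul_edgeAdj (hs : incidence s *ᵥ 1 = c • 1) : 1 ᵥ* edgeAdj s = (c - 1) • 1 := by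
  have hmul : 1 ᵥ* (1 : Matrix V V ℝ).submatrix s s = c • 1 := by
    rw [← mulVec_transpose, transpose_submatrix, transpose_one]
    exact congrArg (· ∘ s) hs
  rw [edgeAdj, vecMul_sub, hmul, vecMul_one, sub_smul, one_smul]

variable [Fintype V]

lemma one_vecMul_nbWalk (hs : incidence s *ᵥ 1 = c • 1) (ht : incidence t *ᵥ 1 = d • 1) (k : ℕ) :
    1 ᵥ* nbWalk s t k = nbWalkCount c d k • 1 := by
  cases k with
  | zero => simp [nbWalk, nbWalkCount]
  | succ k =>
    have hpow : 1 ᵥ* (edgeAdj t * edgeAdj s) ^ k = ((c - 1) * (d - 1)) ^ k • 1 := by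
      induction k with
      | zero => simp
      | succ k ih =>
        rw [pow_succ, ← vecMul_vecMul, ih, smul_vecMul, ← vecMul_vecMul, one_vecMul_edgeAdj ht,
          smul_vecMul, one_vecMul_edgeAdj hs]
        module
    simp only [nbWalk, nbWalkCount, ← vecMul_vecMul, one_vecMul_incidence, hpow, smul_vecMul,
      one_vecMul_edgeAdj ht, vecMul_transpose, hs, mulVec_smul]
    module

variable [Fintype U]

lemma mul_transpose_mul_incidence_mul {A : Matrix V U ℝ} (hA : A = incidence s * (incidence t)ᵀ)
    (hs : incidence s *ᵥ 1 = c • 1) {X : Type*} (P : Matrix E X ℝ) :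
    A * Aᵀ * (incidence s * P) =
      c • (incidence s * P) + incidence s * (edgeAdj t * P)
        + incidence s * (edgeAdj t * edgeAdj s * P) := by
  have hS : A * Aᵀ * (incidence s * P) =
      incidence s * P + incidence s * edgeAdj s * P + incidence s * (edgeAdj t * P)
        + incidence s * (edgeAdj t * edgeAdj s * P) := by
    calc A * Aᵀ * (incidence s * P)
      _ = incidence s * ((1 + edgeAdj t) * (((incidence s)ᵀ * incidence s) * P)) := by
        simp only [biadjacency_mul_transpose hA, Matrix.mul_assoc]
      _ = _ := by
        rw [transpose_incidence_mul_incidence]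
        simp only [Matrix.add_mul, Matrix.mul_add, Matrix.one_mul, Matrix.mul_assoc]
        abel
  rw [hS, incidence_mul_edgeAdj hs, Matrix.smul_mul]
  module

lemma mul_nbWalk_zero {A : Matrix V U ℝ} (hA : A = incidence s * (incidence t)ᵀ)
    (hs : incidence s *ᵥ 1 = c • 1) :
    A * Aᵀ * nbWalk s t 0 = nbWalk s t 1 + c • nbWalk s t 0 := by
  simp only [nbWalk, biadjacency_mul_transpose hA, Matrix.mul_add, Matrix.add_mul, Matrix.mul_one,
    incidence_mul_transpose_incidence hs, pow_zero, Matrix.one_mul, Matrix.mul_assoc]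
  abel

lemma mul_nbWalk_one {A : Matrix V U ℝ} (hA : A = incidence s * (incidence t)ᵀ)
    (hs : incidence s *ᵥ 1 = c • 1) (ht : incidence t *ᵥ 1 = d • 1) :
    A * Aᵀ * nbWalk s t 1 =
      nbWalk s t 2 + (c + d - 2) • nbWalk s t 1 + (c * (d - 1)) • nbWalk s t 0 := by
  simp only [nbWalk, mul_transpose_mul_incidence_mul hA hs, pow_zero, pow_one,
    Matrix.one_mul]
  rw [← Matrix.mul_assoc (edgeAdj t) (edgeAdj t), edgeAdj_mul_self ht]
  simp only [Matrix.add_mul, Matrix.smul_mul, Matrix.one_mul, Matrix.mul_add, Matrix.mul_smul,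
    incidence_mul_transpose_incidence hs, Matrix.mul_assoc]
  module

lemma mul_nbWalk_add_two {A : Matrix V U ℝ} (hA : A = incidence s * (incidence t)ᵀ)
    (hs : incidence s *ᵥ 1 = c • 1) (ht : incidence t *ᵥ 1 = d • 1) (k : ℕ) :
    A * Aᵀ * nbWalk s t (k + 2) =
      nbWalk s t (k + 3) + (c + d - 2) • nbWalk s t (k + 2)
        + ((c - 1) * (d - 1)) • nbWalk s t (k + 1) := by
  set X := (edgeAdj t * edgeAdj s) ^ k * edgeAdj t * (incidence s)ᵀ
  have h1 : nbWalk s t (k + 1) = incidence s * X := rfl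
  have h2 : nbWalk s t (k + 2) = incidence s * (edgeAdj t * edgeAdj s * X) := by
    simp only [X, nbWalk, pow_succ', Matrix.mul_assoc]
  have h3 : nbWalk s t (k + 3) =
      incidence s * (edgeAdj t * edgeAdj s * (edgeAdj t * edgeAdj s * X)) := by
    simp only [X, nbWalk, pow_succ', Matrix.mul_assoc]
  have hback : incidence s * (edgeAdj t * (edgeAdj t * edgeAdj s * X)) =
      (d - 2) • (incidence s * (edgeAdj t * edgeAdj s * X))
        + ((c - 1) * (d - 1)) • (incidence s * X) := by
    rw [Matrix.mul_assoc (edgeAdj t), ← Matrix.mul_assoc (edgeAdj t) (edgeAdj t),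
      edgeAdj_mul_self ht, Matrix.add_mul, Matrix.mul_add, Matrix.smul_mul, Matrix.smul_mul,
      Matrix.one_mul, Matrix.mul_smul, Matrix.mul_smul,
      ← Matrix.mul_assoc (incidence s) (edgeAdj s) X, incidence_mul_edgeAdj hs, Matrix.smul_mul,
      smul_smul, mul_comm (d - 1)]
  rw [h3, h2, mul_transpose_mul_incidence_mul hA hs, hback, h1]
  module

end NonbacktrackingWalks

section RadialWeights

/-- Weights `w k` of a radial function on the distances `2 k` of the biregular tree with branching
product `p = (c - 1) (d - 1)`: a positive solution on `1, …, j + 1` of the eigenvalue recurrence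
`w k + p w (k + 2) = a w (k + 1)`, vanishing at the boundary points `0` and `j + 2`. -/
structure IsRadialWeight (p a : ℝ) (j : ℕ) (w : ℕ → ℝ) : Prop where
  zero : w 0 = 0
  last : w (j + 2) = 0
  pos : 0 < w 1
  nonneg : ∀ k ≤ j + 1, 0 ≤ w k
  recurrence : ∀ k, w k + p * w (k + 2) = a * w (k + 1)

lemma isRadialWeight_sin {q : ℝ} (hq : 0 < q) (j : ℕ) :
    IsRadialWeight (q ^ 2) (2 * q * Real.cos (Real.pi / (j + 2))) j
      fun k => Real.sin (k * (Real.pi / (j + 2))) / q ^ k := by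
  set φ := Real.pi / ((j : ℝ) + 2)
  have hφ : 0 < φ := div_pos Real.pi_pos (by positivity)
  have hφπ : ((j : ℝ) + 2) * φ = Real.pi := mul_div_cancel₀ _ (by positivity)
  have hlt (k : ℕ) (hk : k ≤ j + 1) : k * φ < Real.pi := by
    have hk' : (k : ℝ) < j + 2 := by exact_mod_cast Nat.lt_succ_of_le hk
    rw [← hφπ]
    gcongr
  refine ⟨by simp, by simp [hφπ], ?_, fun k hk => ?_, fun k => ?_⟩
  · exact div_pos (Real.sin_pos_of_pos_of_lt_pi (by simpa using hφ) (hlt 1 (by omega)))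
      (by positivity)
  · exact div_nonneg (Real.sin_nonneg_of_nonneg_of_le_pi (by positivity) (hlt k hk).le)
      (by positivity)
  · have hprev : (k : ℝ) * φ = (k + 1 : ℕ) * φ - φ := by
      push_cast
      ring
    have hnext : ((k + 2 : ℕ) : ℝ) * φ = (k + 1 : ℕ) * φ + φ := by
      push_cast
      ring
    rw [hprev, hnext, Real.sin_add, Real.sin_sub]
    field_simp
    ring

lemma exists_isRadialWeight {q b : ℝ} (hq : 0 < q) (hb : b < 2 * q) :
    ∃ a j w, b < a ∧ a ≤ 2 * q ∧ IsRadialWeight (q ^ 2) a j w := by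
  have hangle : Tendsto (fun j : ℕ => Real.pi / ((j : ℝ) + 2)) atTop (nhds 0) :=
    tendsto_const_nhds.div_atTop
      (tendsto_atTop_add_const_right _ _ tendsto_natCast_atTop_atTop)
  have hcos : Tendsto (fun j : ℕ => 2 * q * Real.cos (Real.pi / ((j : ℝ) + 2))) atTop
      (nhds (2 * q)) := by
    simpa using ((Real.continuous_cos.tendsto 0).comp hangle).const_mul (2 * q)
  obtain ⟨j, hj⟩ := (hcos.eventually (lt_mem_nhds hb)).exists
  exact ⟨_, j, _, hj, mul_le_of_le_one_right (by positivity) (Real.cos_le_one _),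
    isRadialWeight_sin hq j⟩

end RadialWeights

section RadialKernel

variable {V U E : Type*} [DecidableEq V] [DecidableEq U] [DecidableEq E] [Fintype E]

/-- The kernel of the radial function with weight `w (k + 1)` on nonbacktracking walks of length
`2 (k + 1)`, for `k ≤ j`. The trivial walks get the weight `w 1` instead of `w 0`, which vanishes
for a radial weight: this makes the diagonal positive. -/
def radialKernel (s : E → V) (t : E → U) (w : ℕ → ℝ) (j : ℕ) : Matrix V V ℝ :=
  w 1 • nbWalk s t 0 + ∑ k ∈ Finset.range (j + 1), w (k + 1) • nbWalk s t (k + 1)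

/-- The column sum of `radialKernel` for a `(c, d)`-biregular bipartite multigraph. -/
def radialMass (c d : ℝ) (w : ℕ → ℝ) (j : ℕ) : ℝ :=
  w 1 * nbWalkCount c d 0 + ∑ k ∈ Finset.range (j + 1), w (k + 1) * nbWalkCount c d (k + 1)

variable {s : E → V} {t : E → U} {w : ℕ → ℝ} {j : ℕ} {a c d p : ℝ}

lemma mul_one_apply_le_radialKernel (hw : IsRadialWeight p a j w) (u v : V) :
    w 1 * (1 : Matrix V V ℝ) u v ≤ radialKernel s t w j u v := by
  simp only [radialKernel, Matrix.add_apply, Matrix.smul_apply, Matrix.sum_apply, smul_eq_mul]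
  refine le_add_of_nonneg_right (Finset.sum_nonneg fun k hk => ?_)
  have hk' := Finset.mem_range.1 hk
  exact mul_nonneg (hw.nonneg _ hk') (nbWalk_nonneg s t _ u v)

lemma radialKernel_nonneg (hw : IsRadialWeight p a j w) (u v : V) :
    0 ≤ radialKernel s t w j u v :=
  (mul_nonneg hw.pos.le (by rw [one_apply]; positivity)).trans
    (mul_one_apply_le_radialKernel hw u v)

variable [Fintype V]

lemma one_vecMul_radialKernel (hs : incidence s *ᵥ 1 = c • 1) (ht : incidence t *ᵥ 1 = d • 1) :
    1 ᵥ* radialKernel s t w j = radialMass c d w j • 1 := by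
  simp only [radialKernel, radialMass, vecMul_add, vecMul_sum, vecMul_smul,
    one_vecMul_nbWalk hs ht, smul_smul, add_smul, Finset.sum_smul]

variable [Fintype U] {A : Matrix V U ℝ}

lemma mul_sum_smul_nbWalk (hA : A = incidence s * (incidence t)ᵀ)
    (hs : incidence s *ᵥ 1 = c • 1) (ht : incidence t *ᵥ 1 = d • 1) (hw0 : w 0 = 0)
    (hw : ∀ k, w k + (c - 1) * (d - 1) * w (k + 2) = a * w (k + 1)) (j : ℕ) :
    A * Aᵀ * ∑ k ∈ Finset.range (j + 1), w (k + 1) • nbWalk s t (k + 1) =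
      (c + d - 2 + a) • ∑ k ∈ Finset.range (j + 1), w (k + 1) • nbWalk s t (k + 1)
        + (w 1 * (c * (d - 1))) • nbWalk s t 0 + w (j + 1) • nbWalk s t (j + 2)
        - ((c - 1) * (d - 1) * w (j + 2)) • nbWalk s t (j + 1) := by
  induction j with
  | zero =>
    have h := hw 0
    rw [hw0, zero_add] at h
    simp only [zero_add, Finset.sum_range_one, Matrix.mul_smul, mul_nbWalk_one hA hs ht, h]
    module
  | succ j ih =>
    rw [Finset.sum_range_succ, Matrix.mul_add, ih, Matrix.mul_smul, mul_nbWalk_add_two hA hs ht,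
      ← sub_eq_iff_eq_add'.2 (hw (j + 1)).symm]
    module

lemma mul_radialKernel (hA : A = incidence s * (incidence t)ᵀ) (hs : incidence s *ᵥ 1 = c • 1)
    (ht : incidence t *ᵥ 1 = d • 1) (hw : IsRadialWeight ((c - 1) * (d - 1)) a j w) :
    A * Aᵀ * radialKernel s t w j =
      (c + d - 2 + a) • radialKernel s t w j + (w 1 * (c * d - (c + d - 2 + a))) • nbWalk s t 0
        + w 1 • nbWalk s t 1 + w (j + 1) • nbWalk s t (j + 2) := by
  rw [radialKernel, Matrix.mul_add, mul_sum_smul_nbWalk hA hs ht hw.zero hw.recurrence,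
    Matrix.mul_smul, mul_nbWalk_zero hA hs, hw.last]
  module

lemma smul_radialKernel_le_mul_radialKernel (hA : A = incidence s * (incidence t)ᵀ)
    (hs : incidence s *ᵥ 1 = c • 1) (ht : incidence t *ᵥ 1 = d • 1)
    (hw : IsRadialWeight ((c - 1) * (d - 1)) a j w) (ha : c + d - 2 + a ≤ c * d) (u v : V) :
    (c + d - 2 + a) * radialKernel s t w j u v ≤ (A * Aᵀ * radialKernel s t w j) u v := by
  rw [mul_radialKernel hA hs ht hw]
  simp only [Matrix.add_apply, Matrix.smul_apply, smul_eq_mul]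
  have h0 := mul_nonneg (mul_nonneg hw.pos.le (sub_nonneg.2 ha)) (nbWalk_nonneg s t 0 u v)
  have h1 := mul_nonneg hw.pos.le (nbWalk_nonneg s t 1 u v)
  have hj := mul_nonneg (hw.nonneg (j + 1) le_rfl) (nbWalk_nonneg s t (j + 2) u v)
  linarith

end RadialKernel

universe u v

lemma exists_eq_incidence_mul_transpose {V : Type u} {U : Type v} [Finite V] [Finite U]
    [DecidableEq V] [DecidableEq U] {A : Matrix V U ℝ} (hA : ∀ v u, ∃ k : ℕ, A v u = k) :
    ∃ (E : Type (max u v)) (_ : Fintype E) (s : E → V) (t : E → U),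
      A = incidence s * (incidence t)ᵀ := by
  cases nonempty_fintype V
  cases nonempty_fintype U
  choose N hN using hA
  refine ⟨Σ e : V × U, Fin (N e.1 e.2), inferInstance, fun e => e.1.1, fun e => e.1.2, ?_⟩
  ext v u
  simp [mul_apply, incidence, one_apply, Fintype.sum_sigma, Fintype.sum_prod_type, hN,
    apply_ite Finset.card]

/-- `A` is the biadjacency matrix of a `(c, d)`-biregular bipartite multigraph: its entries are edge
multiplicities. -/
structure IsBiregular {V U : Type*} [Fintype V] [Fintype U] (A : Matrix V U ℝ) (c d : ℝ) :
    Prop where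
  exists_natCast : ∀ v u, ∃ k : ℕ, A v u = k
  row_sum : ∀ v, ∑ u, A v u = c
  col_sum : ∀ u, ∑ v, A v u = d

namespace IsBiregular

variable {V : Type u} {U : Type v} [Fintype V] [Fintype U] {A : Matrix V U ℝ} {c d : ℝ}

lemma mulVec_one (hA : IsBiregular A c d) : A *ᵥ 1 = c • 1 := by
  ext v
  simp [mulVec, dotProduct, hA.row_sum]

lemma transpose_mulVec_one (hA : IsBiregular A c d) : Aᵀ *ᵥ 1 = d • 1 := by
  ext u
  simp [mulVec, dotProduct, hA.col_sum]

lemma mul_transpose_mulVec_one (hA : IsBiregular A c d) : (A * Aᵀ) *ᵥ 1 = (c * d) • 1 := by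
  rw [← mulVec_mulVec, hA.transpose_mulVec_one, mulVec_smul, hA.mulVec_one, smul_smul, mul_comm]

lemma mul_card_eq (hA : IsBiregular A c d) : c * Fintype.card V = d * Fintype.card U := by
  have h := Finset.sum_comm (s := .univ) (t := .univ) (f := A)
  simpa [hA.row_sum, hA.col_sum, mul_comm] using h

lemma incidence_left_mulVec_one [DecidableEq V] [DecidableEq U] {E : Type*} [Fintype E]
    {s : E → V} {t : E → U} (hA : IsBiregular (incidence s * (incidence t)ᵀ) c d) :
    incidence s *ᵥ 1 = c • 1 := by
  rw [← hA.mulVec_one, ← mulVec_mulVec, mulVec_transpose, one_vecMul_incidence]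

lemma incidence_right_mulVec_one [DecidableEq V] [DecidableEq U] {E : Type*} [Fintype E]
    {s : E → V} {t : E → U} (hA : IsBiregular (incidence s * (incidence t)ᵀ) c d) :
    incidence t *ᵥ 1 = d • 1 := by
  rw [← hA.transpose_mulVec_one, transpose_mul, transpose_transpose, ← mulVec_mulVec,
    mulVec_transpose, one_vecMul_incidence]

lemma exists_radial_vector (hA : IsBiregular A c d) {w : ℕ → ℝ} {j : ℕ} {a : ℝ}
    (hw : IsRadialWeight ((c - 1) * (d - 1)) a j w) (ha : c + d - 2 + a ≤ c * d) (v : V) :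
    ∃ f : V → ℝ, 1 ⬝ᵥ f = radialMass c d w j ∧ w 1 ^ 2 ≤ f ⬝ᵥ f ∧
      (c + d - 2 + a) * (f ⬝ᵥ f) ≤ f ⬝ᵥ (A * Aᵀ) *ᵥ f := by
  classical
  obtain ⟨E, _, s, t, rfl⟩ := exists_eq_incidence_mul_transpose hA.exists_natCast
  have hs := hA.incidence_left_mulVec_one
  have ht := hA.incidence_right_mulVec_one
  set f : V → ℝ := fun u => radialKernel s t w j u v
  have hfv : w 1 ≤ f v := by
    simpa using mul_one_apply_le_radialKernel (s := s) (t := t) hw v v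
  refine ⟨f, ?_, ?_, ?_⟩
  · simpa [vecMul] using congrFun (one_vecMul_radialKernel hs ht) v
  · calc w 1 ^ 2 ≤ f v * f v := by nlinarith [hw.pos]
      _ ≤ f ⬝ᵥ f := Finset.single_le_sum (f := fun u => f u * f u)
        (fun u _ => mul_self_nonneg (f u)) (Finset.mem_univ v)
  · rw [← smul_eq_mul, ← dotProduct_smul]
    exact dotProduct_le_dotProduct_of_nonneg_left
      (fun u => smul_radialKernel_le_mul_radialKernel rfl hs ht hw ha u v)
      fun u => radialKernel_nonneg hw u v

lemma mul_card_le [DecidableEq V] [DecidableEq U] (hA : IsBiregular A c d) {θ : ℝ}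
    (hθ : nthLargestEig (fromBlocks 0 A Aᵀ 0) 2 ≤ θ) (hθ0 : 0 < θ) (hθcd : θ < √c * √d)
    {w : ℕ → ℝ} {j : ℕ} {a : ℝ} (hw : IsRadialWeight ((c - 1) * (d - 1)) a j w)
    (ha : c + d - 2 + a ≤ c * d) (hθa : θ ^ 2 ≤ c + d - 2 + a) :
    (c + d - 2 + a - θ ^ 2) * w 1 ^ 2 * Fintype.card V ≤
      (c * d - θ ^ 2) * radialMass c d w j ^ 2 := by
  rcases isEmpty_or_nonempty V with hV | ⟨⟨v⟩⟩
  · simpa using mul_nonneg (sub_nonneg.2 (hθa.trans ha)) (sq_nonneg (radialMass c d w j))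
  obtain ⟨f, hf1, hff, hMf⟩ := hA.exists_radial_vector hw ha v
  calc (c + d - 2 + a - θ ^ 2) * w 1 ^ 2 * Fintype.card V
    _ ≤ (c + d - 2 + a - θ ^ 2) * (f ⬝ᵥ f) * Fintype.card V := by gcongr
    _ ≤ (c * d - θ ^ 2) * (1 ⬝ᵥ f) ^ 2 :=
      card_mul_dotProduct_self_le (by rw [transpose_mul, transpose_transpose])
        hA.mul_transpose_mulVec_one
        (fun g hg => dotProduct_mul_transpose_mulVec_le hA.mulVec_one hA.transpose_mulVec_one
          hθ hθ0 hθcd hg) hMf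
    _ = (c * d - θ ^ 2) * radialMass c d w j ^ 2 := by rw [hf1]

end IsBiregular

section SqrtBounds

variable {c d : ℝ}

lemma sq_sqrt_sub_one_add_sqrt_sub_one (hc : 1 ≤ c) (hd : 1 ≤ d) :
    (√(c - 1) + √(d - 1)) ^ 2 = c + d - 2 + 2 * (√(c - 1) * √(d - 1)) := by
  linear_combination Real.sq_sqrt (sub_nonneg.2 hc) + Real.sq_sqrt (sub_nonneg.2 hd)

lemma sq_sqrt_sub_one_mul_sqrt_sub_one (hc : 1 ≤ c) (hd : 1 ≤ d) :
    (√(c - 1) * √(d - 1)) ^ 2 = (c - 1) * (d - 1) := by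
  rw [mul_pow, Real.sq_sqrt (sub_nonneg.2 hc), Real.sq_sqrt (sub_nonneg.2 hd)]

lemma add_two_mul_sqrt_le_mul (hc : 1 ≤ c) (hd : 1 ≤ d) :
    c + d - 2 + 2 * (√(c - 1) * √(d - 1)) ≤ c * d := by
  linarith [sq_nonneg (√(c - 1) * √(d - 1) - 1), sq_sqrt_sub_one_mul_sqrt_sub_one hc hd]

lemma sqrt_sub_one_add_sqrt_sub_one_le (hc : 1 ≤ c) (hd : 1 ≤ d) :
    √(c - 1) + √(d - 1) ≤ √c * √d := by
  rw [← Real.sqrt_mul (by linarith)]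
  refine Real.le_sqrt_of_sq_le ?_
  rw [sq_sqrt_sub_one_add_sqrt_sub_one hc hd]
  exact add_two_mul_sqrt_le_mul hc hd

end SqrtBounds

lemma exists_card_le {c d θ : ℝ} (hc : 1 < c) (hd : 1 < d) (hθ : θ < √(c - 1) + √(d - 1)) :
    ∃ C : ℝ, ∀ {V : Type u} {U : Type v} [Fintype V] [Fintype U] [DecidableEq V] [DecidableEq U]
      {A : Matrix V U ℝ}, IsBiregular A c d →
        nthLargestEig (fromBlocks 0 A Aᵀ 0) 2 ≤ θ → Fintype.card V ≤ C := by
  set q := √(c - 1) * √(d - 1)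
  have hc' : 0 < √(c - 1) := Real.sqrt_pos.2 (sub_pos.2 hc)
  have hd' : 0 < √(d - 1) := Real.sqrt_pos.2 (sub_pos.2 hd)
  obtain ⟨η, hη, hηlt⟩ := exists_between (max_lt hθ (add_pos hc' hd'))
  obtain ⟨hθη, hη0⟩ := max_lt_iff.1 hη
  have hη_sq : η ^ 2 - (c + d - 2) < 2 * q := by
    rw [sub_lt_iff_lt_add', ← sq_sqrt_sub_one_add_sqrt_sub_one hc.le hd.le]
    gcongr
  obtain ⟨a, j, w, hηa, haq, hw⟩ := exists_isRadialWeight (mul_pos hc' hd') hη_sq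
  rw [sq_sqrt_sub_one_mul_sqrt_sub_one hc.le hd.le] at hw
  refine ⟨(c * d - η ^ 2) * radialMass c d w j ^ 2 / ((c + d - 2 + a - η ^ 2) * w 1 ^ 2),
    fun hA hA2 => ?_⟩
  rw [le_div_iff₀' (mul_pos (by linarith) (pow_pos hw.pos 2))]
  exact hA.mul_card_le (hA2.trans hθη.le) hη0
    (hηlt.trans_le (sqrt_sub_one_add_sqrt_sub_one_le hc.le hd.le)) hw
    (by linarith [add_two_mul_sqrt_le_mul hc.le hd.le]) (by linarith)

theorem feng_li_general {c d θ : ℝ} (hc : 1 < c) (hd : 1 < d) (hθ : θ < √(c - 1) + √(d - 1)) :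
    ∃ K : ℕ, ∀ {V : Type u} {U : Type v} [Fintype V] [Fintype U] [DecidableEq V] [DecidableEq U]
      {A : Matrix V U ℝ}, IsBiregular A c d →
        nthLargestEig (fromBlocks 0 A Aᵀ 0) 2 ≤ θ → Fintype.card V + Fintype.card U ≤ K := by
  obtain ⟨C, hC⟩ := exists_card_le hc hd hθ
  refine ⟨⌈(1 + c) * C⌉₊, fun {V U} _ _ _ _ A hA hA2 => ?_⟩
  have hU : (Fintype.card U : ℝ) ≤ c * Fintype.card V := by
    rw [hA.mul_card_eq]
    exact le_mul_of_one_le_left (Nat.cast_nonneg _) hd.le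
  refine Nat.cast_le.1 (le_trans ?_ (Nat.le_ceil _))
  calc ((Fintype.card V + Fintype.card U : ℕ) : ℝ)
    _ ≤ (1 + c) * Fintype.card V := by
      push_cast
      linarith
    _ ≤ (1 + c) * C := by
      gcongr
      exact hC hA hA2

/-- **Feng–Li (Alon–Boppana for biregular bipartite graphs).**
Let `G₁, G₂, …` be a sequence of `(c,d)`-biregular bipartite graphs — given by 0–1
biadjacency matrices `A i` of size `m i × n i` with constant row sums `c` and constant
column sums `d` — whose numbers of vertices `m i + n i` tend to infinity.  If the second
largest eigenvalue of the adjacency matrix `Bᵢ = [[0, Aᵢ],[Aᵢᵀ, 0]]` is at most `θ` for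
every `i`, then `θ ≥ √(c−1) + √(d−1)`. -/
theorem feng_li
    (c d : ℕ) (hc : 2 ≤ c) (hd : 2 ≤ d) (θ : ℝ)
    (m n : ℕ → ℕ)
    (A : ∀ i : ℕ, Matrix (Fin (m i)) (Fin (n i)) ℝ)
    (h01 : ∀ i a b, A i a b = 0 ∨ A i a b = 1)
    (hrow : ∀ i a, ∑ b, A i a b = c)
    (hcol : ∀ i b, ∑ a, A i a b = d)
    (hgrow : Tendsto (fun i => m i + n i) atTop atTop)
    (hθ : ∀ i, nthLargestEig
      (Matrix.fromBlocks 0 (A i) (A i)ᵀ 0) 2 ≤ θ) :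
    Real.sqrt ((c : ℝ) - 1) + Real.sqrt ((d : ℝ) - 1) ≤ θ := by
  by_contra! hlt
  obtain ⟨K, hK⟩ := feng_li_general (Nat.one_lt_cast.2 hc) (Nat.one_lt_cast.2 hd) hlt
  obtain ⟨i, hi⟩ := (hgrow.eventually_gt_atTop K).exists
  have hA : IsBiregular (A i) c d :=
    ⟨fun a b => (h01 i a b).elim (fun h => ⟨0, by simp [h]⟩) fun h => ⟨1, by simp [h]⟩,
      hrow i, hcol i⟩
  exact hi.not_ge (by simpa using hK hA (hθ i))
end
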